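/- Let θ₁, θ₂, θ₃ ∈ [0, π] be real numbers with θ₁ + θ₂ + θ₃ < π. Then cos²θ₁ + cos²θ₂ + cos²θ₃ + 2·cosθ₁·cosθ₂·cosθ₃ > 1. -/

import Mathlib

/-!
The quadratic `z² + 2 z cos a cos b + cos² a + cos² b - 1` in `z` has the roots `-cos (a + b)` and
`-cos (a - b)`. At `z = cos c` both linear factors are positive, because `cos x + cos y > 0` as soon
as `|x| + |y| < π`, and `|a ± b| ≤ |a| + |b|`.
-/

theorem cos_add_cos_pos_of_abs_add_abs_lt_pi {x y : ℝ} (h : |x| + |y| < Real.pi) :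
    0 < Real.cos x + Real.cos y := by
  have hlt : Real.cos (Real.pi - |y|) < Real.cos |x| :=
    Real.cos_lt_cos_of_nonneg_of_le_pi (abs_nonneg x) (sub_le_self _ (abs_nonneg y))
      (lt_sub_iff_add_lt.mpr h)
  rw [Real.cos_pi_sub, Real.cos_abs, Real.cos_abs] at hlt
  exact neg_lt_iff_pos_add.mp hlt

theorem cos_add_add_cos_mul_cos_sub_add_cos_eq (a b c : ℝ) :
    (Real.cos (a + b) + Real.cos c) * (Real.cos (a - b) + Real.cos c) =
      Real.cos a ^ 2 + Real.cos b ^ 2 + Real.cos c ^ 2 +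
        2 * Real.cos a * Real.cos b * Real.cos c - 1 := by
  have hprod : Real.cos (a + b) * Real.cos (a - b) = Real.cos a ^ 2 + Real.cos b ^ 2 - 1 := by
    rw [Real.cos_add, Real.cos_sub]
    linear_combination -Real.sin b ^ 2 * Real.sin_sq_add_cos_sq a +
      (Real.cos a ^ 2 - 1) * Real.sin_sq_add_cos_sq b
  linear_combination hprod - Real.cos c * Real.two_mul_cos_mul_cos a b

theorem cos_sum_gt_one_general (a b c : ℝ) (h : |a| + |b| + |c| < Real.pi) :
    Real.cos a ^ 2 + Real.cos b ^ 2 + Real.cos c ^ 2 +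
      2 * Real.cos a * Real.cos b * Real.cos c > 1 := by
  have hadd : 0 < Real.cos (a + b) + Real.cos c :=
    cos_add_cos_pos_of_abs_add_abs_lt_pi (by linarith [abs_add_le a b])
  have hsub : 0 < Real.cos (a - b) + Real.cos c :=
    cos_add_cos_pos_of_abs_add_abs_lt_pi (by linarith [abs_sub a b])
  have hprod := mul_pos hadd hsub
  rw [cos_add_add_cos_mul_cos_sub_add_cos_eq] at hprod
  exact sub_pos.mp hprod

theorem cos_sum_gt_one (θ₁ θ₂ θ₃ : ℝ)
    (h₁ : θ₁ ∈ Set.Icc 0 Real.pi) (h₂ : θ₂ ∈ Set.Icc 0 Real.pi)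
    (h₃ : θ₃ ∈ Set.Icc 0 Real.pi)
    (h : θ₁ + θ₂ + θ₃ < Real.pi) :
    Real.cos θ₁ ^ 2 + Real.cos θ₂ ^ 2 + Real.cos θ₃ ^ 2 +
      2 * Real.cos θ₁ * Real.cos θ₂ * Real.cos θ₃ > 1 :=
  cos_sum_gt_one_general θ₁ θ₂ θ₃ <| by
    rwa [abs_of_nonneg h₁.1, abs_of_nonneg h₂.1, abs_of_nonneg h₃.1]
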